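/- arXiv:math/0312195 — 2 statements merged into one kernel-verified Lean document; each statement's English description precedes it below -/
import Mathlib

section
/- Let k be an algebraically closed field, G a group, and let (V, ξ) be an Ad-equivariant family over G, i.e. for each x ∈ G a k-vector space V x together with k-linear equivalences ξ g x : V x ≃ V (g * x * g⁻¹) satisfying the cocycle conditions ξ g' (g * x * g⁻¹) ∘ ξ g x = ξ (g' * g) x and ξ 1 x = id. Fix x ∈ G and assume V x is nonzero and finite-dimensional over k, and that V x is irreducible under the action of the centralizer of {x} (i.e. the only k-subspaces of V x stable under ξ h x for all h in the centralizer of {x} are 0 and V x). Then there exists a unique scalar θ ∈ k such that the canonical automorphism Θ_x := ξ x x equals θ • id on V x; moreover, if x has finite order n in G, then θ^n = 1. -/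
/-- Transport a vector space along an equality of points of the index type. -/
def castLE (k : Type*) [Field k] {ι : Type*} {V : ι → Type*}
    [∀ i, AddCommGroup (V i)] [∀ i, Module k (V i)] {i j : ι} (h : i = j) :
    V i ≃ₗ[k] V j := by subst h; exact LinearEquiv.refl k (V i)

/-- An element of the centralizer of `{x}` conjugates `x` to itself. -/
lemma conj_of_mem_centralizer {G : Type*} [Group G] {x : G}
    (h : Subgroup.centralizer ({x} : Set G)) : (h : G) * x * (h : G)⁻¹ = x := by
  have hx : x * (h : G) = (h : G) * x :=
    (Subgroup.mem_centralizer_iff.mp h.2) x (Set.mem_singleton x)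
  rw [← hx, mul_inv_cancel_right]

lemma castLE_castLE (k : Type*) [Field k] {ι : Type*} {V : ι → Type*}
    [∀ i, AddCommGroup (V i)] [∀ i, Module k (V i)] {i j l : ι} (h : i = j) (h' : j = l)
    (v : V i) : castLE k h' (castLE k h v : V j) = (castLE k (h.trans h') v : V l) := by
  subst h h'; rfl

lemma map_castLE {k : Type*} [Field k] {G : Type*} [Group G]
    {V : G → Type*} [∀ x, AddCommGroup (V x)] [∀ x, Module k (V x)]
    (ξ : ∀ g x : G, V x ≃ₗ[k] V (g * x * g⁻¹)) (g : G) {y z : G} (h : y = z) (v : V y) :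
    ξ g z (castLE k h v) =
      castLE k (congrArg (fun t => g * t * g⁻¹) h) (ξ g y v) := by
  subst h; rfl

lemma castLE_map_congr {k : Type*} [Field k] {G : Type*} [Group G]
    {V : G → Type*} [∀ x, AddCommGroup (V x)] [∀ x, Module k (V x)]
    (ξ : ∀ g x : G, V x ≃ₗ[k] V (g * x * g⁻¹)) {g g' x : G} (e : g = g')
    (h : g * x * g⁻¹ = x) (h' : g' * x * g'⁻¹ = x) (v : V x) :
    (castLE k h (ξ g x v) : V x) = castLE k h' (ξ g' x v) := by
  subst e; rfl

/-- Elements fixing `x` under conjugation act multiplicatively on the fibre at `x`. -/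
lemma castLE_map_castLE_map {k : Type*} [Field k] {G : Type*} [Group G]
    {V : G → Type*} [∀ x, AddCommGroup (V x)] [∀ x, Module k (V x)]
    (ξ : ∀ g x : G, V x ≃ₗ[k] V (g * x * g⁻¹))
    (cocycle : ∀ (g' g x : G)
      (e : (g' * g) * x * (g' * g)⁻¹ = g' * (g * x * g⁻¹) * g'⁻¹),
      (ξ g x).trans (ξ g' (g * x * g⁻¹)) = (ξ (g' * g) x).trans (castLE k e))
    {g' g x : G} (h' : g' * x * g'⁻¹ = x) (h : g * x * g⁻¹ = x)
    (hmul : (g' * g) * x * (g' * g)⁻¹ = x) (v : V x) :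
    (castLE k h' (ξ g' x (castLE k h (ξ g x v))) : V x) =
      castLE k hmul (ξ (g' * g) x v) := by
  have key := LinearEquiv.congr_fun (cocycle g' g x (by rw [hmul, h, h'])) v
  simp only [LinearEquiv.trans_apply] at key
  rw [map_castLE ξ g' h, key, castLE_castLE, castLE_castLE]

/-- Schur's lemma for the canonical automorphism of an `Ad`-equivariant family:
if `V x` is nonzero, finite dimensional over an algebraically closed field, and
irreducible under the action of the centralizer of `{x}`, then `Θ_x = ξ x x` is a
unique scalar `θ`; moreover if `x` has finite order `n` then `θ ^ n = 1`. -/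
theorem canonical_automorphism_is_root_of_unity_scalar
    {k : Type*} [Field k] [IsAlgClosed k] {G : Type*} [Group G]
    (V : G → Type*) [∀ x, AddCommGroup (V x)] [∀ x, Module k (V x)]
    (ξ : ∀ g x : G, V x ≃ₗ[k] V (g * x * g⁻¹))
    (cocycle : ∀ g' g x : G, (ξ g x).trans (ξ g' (g * x * g⁻¹)) =
      (ξ (g' * g) x).trans
        (castLE k (show (g' * g) * x * (g' * g)⁻¹ = g' * (g * x * g⁻¹) * g'⁻¹ by group)))
    (norm : ∀ x : G,
      (ξ 1 x).trans (castLE k (show (1 : G) * x * (1 : G)⁻¹ = x by group)) =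
        LinearEquiv.refl k (V x))
    (x : G) [Nontrivial (V x)] [FiniteDimensional k (V x)]
    (irr : ∀ W : Submodule k (V x),
      (∀ (h : Subgroup.centralizer ({x} : Set G)) (v : V x),
        v ∈ W → castLE k (conj_of_mem_centralizer h) (ξ (h : G) x v) ∈ W) →
      W = ⊥ ∨ W = ⊤) :
    (∃! θ : k, ∀ v : V x,
        castLE k (show x * x * x⁻¹ = x by group) (ξ x x v) = θ • v) ∧
    ∀ θ : k, (∀ v : V x,
        castLE k (show x * x * x⁻¹ = x by group) (ξ x x v) = θ • v) →
      IsOfFinOrder x → θ ^ orderOf x = 1 := by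
  have hcocycle : ∀ (g' g x : G)
      (e : (g' * g) * x * (g' * g)⁻¹ = g' * (g * x * g⁻¹) * g'⁻¹),
      (ξ g x).trans (ξ g' (g * x * g⁻¹)) = (ξ (g' * g) x).trans (castLE k e) :=
    fun g' g x _ => cocycle g' g x
  have hx : x * x * x⁻¹ = x := by group
  have hpow : ∀ n : ℕ, x ^ n * x * (x ^ n)⁻¹ = x := fun n => by
    rw [← pow_succ, pow_succ', mul_inv_cancel_right]
  obtain ⟨v₀, hv₀⟩ := exists_ne (0 : V x)
  refine ⟨?_, fun θ hθ _ => ?_⟩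
  · let T : Module.End k (V x) := ((ξ x x).trans (castLE k hx)).toLinearMap
    have hT : ∀ v, T v = castLE k hx (ξ x x v) := fun _ => rfl
    obtain ⟨θ, hθ⟩ := Module.End.exists_eigenvalue T
    have htop : T.eigenspace θ = ⊤ := by
      refine (irr _ fun h v hv => ?_).resolve_left hθ
      rw [Module.End.mem_eigenspace_iff] at hv ⊢
      have hc := conj_of_mem_centralizer h
      have hcomm : x * (h : G) = h * x :=
        Subgroup.mem_centralizer_iff.mp h.2 x (Set.mem_singleton x)
      have hxh : (x * (h : G)) * x * (x * (h : G))⁻¹ = x := by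
        rw [hcomm, mul_inv_rev, mul_assoc (h : G) x x]
        simpa [mul_assoc] using hc
      have hhx : ((h : G) * x) * x * ((h : G) * x)⁻¹ = x := by rwa [← hcomm]
      rw [hT, castLE_map_castLE_map ξ hcocycle hx hc hxh,
        castLE_map_congr ξ hcomm hxh hhx,
        ← castLE_map_castLE_map ξ hcocycle hc hx hhx, ← hT, hv, map_smul, map_smul]
    have hscalar : ∀ v : V x, castLE k hx (ξ x x v) = θ • v := fun v =>
      Module.End.mem_eigenspace_iff.mp (htop ▸ Submodule.mem_top : v ∈ T.eigenspace θ)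
    exact ⟨θ, hscalar, fun θ' hθ' =>
      smul_left_injective k hv₀ ((hθ' v₀).symm.trans (hscalar v₀))⟩
  · have hone : (1 : G) * x * (1 : G)⁻¹ = x := by group
    have hnorm : ∀ v : V x, castLE k hone (ξ 1 x v) = v := fun v =>
      LinearEquiv.congr_fun (norm x) v
    have hiter : ∀ (n : ℕ) (v : V x), castLE k (hpow n) (ξ (x ^ n) x v) = θ ^ n • v := by
      intro n
      induction n with
      | zero =>
        intro v
        rw [castLE_map_congr ξ (pow_zero x) (hpow 0) hone, hnorm, pow_zero, one_smul]
      | succ n ih =>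
        intro v
        have hmul : (x ^ n * x) * x * (x ^ n * x)⁻¹ = x := by
          rw [← pow_succ]; exact hpow (n + 1)
        rw [castLE_map_congr ξ (pow_succ x n) (hpow (n + 1)) hmul,
          ← castLE_map_castLE_map ξ hcocycle (hpow n) hx hmul, hθ, ih, smul_smul, pow_succ]
    refine smul_left_injective k hv₀ ?_
    change θ ^ orderOf x • v₀ = (1 : k) • v₀
    rw [← hiter, castLE_map_congr ξ (pow_orderOf_eq_one x) (hpow _) hone, hnorm, one_smul]
end

section
/- Let G be a group, P a subgroup of G, k a field, and let (V, ξ) be an Ad-equivariant family over P with induced Ad-equivariant family (W, η) over G, where W x is the space of dependent functions f with f(g) ∈ V (g⁻¹ * x * g) for each g ∈ G with g⁻¹ * x * g ∈ P, satisfying f(g * p) = ξ (p⁻¹) (g⁻¹ * x * g) (f(g)) for all p ∈ P, and (η a x f)(g) := f(a⁻¹ * g). Then the canonical automorphism of the induced family is induced pointwise by the canonical automorphism of the original family: for every x ∈ G, every f ∈ W x, and every g ∈ G with g⁻¹ * x * g ∈ P, one has (η x x f)(g) = ξ (g⁻¹ * x * g) (g⁻¹ * x * g) (f(g)). -/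
lemma mem_conj {G : Type*} [Group G] (P : Subgroup G) {x g : G} (p : P)
    (h : g⁻¹ * x * g ∈ P) : (g * (p : G))⁻¹ * x * (g * (p : G)) ∈ P := by
  have e : (g * (p : G))⁻¹ * x * (g * (p : G)) = (p : G)⁻¹ * (g⁻¹ * x * g) * (p : G) := by
    group
  rw [e]; exact P.mul_mem (P.mul_mem (P.inv_mem p.2) h) p.2

lemma mem_transport {G : Type*} [Group G] (P : Subgroup G) (a x g : G)
    (h : g⁻¹ * (a * x * a⁻¹) * g ∈ P) : (a⁻¹ * g)⁻¹ * x * (a⁻¹ * g) ∈ P := by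
  have e : (a⁻¹ * g)⁻¹ * x * (a⁻¹ * g) = g⁻¹ * (a * x * a⁻¹) * g := by group
  rw [e]; exact h

variable (k : Type*) [Field k] {G : Type*} [Group G] (P : Subgroup G)

/-- The ambient space of the induced family at `x : G`: dependent functions assigning to
each `g : G` with `g⁻¹ * x * g ∈ P` an element of `V (g⁻¹ * x * g)`. -/
abbrev Wamb (V : P → Type*) (x : G) :=
  ∀ g : {g : G // g⁻¹ * x * g ∈ P}, V ⟨(g : G)⁻¹ * x * (g : G), g.2⟩

/-- The induced space `W x`: the subspace of `Wamb` consisting of functions compatible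
with the `P`-equivariant structure `ξ`. -/
def IndSub (V : P → Type*) [∀ p, AddCommGroup (V p)] [∀ p, Module k (V p)]
    (ξ : ∀ q p : P, V p ≃ₗ[k] V (q * p * q⁻¹)) (x : G) :
    Submodule k (Wamb P V x) where
  carrier := {f | ∀ (g : {g : G // g⁻¹ * x * g ∈ P}) (p : P),
    f ⟨(g : G) * (p : G), mem_conj P p g.2⟩ =
      castLE k (Subtype.ext (by push_cast; group))
        (ξ p⁻¹ ⟨(g : G)⁻¹ * x * (g : G), g.2⟩ (f g))}
  add_mem' := by
    intro f f' hf hf' g p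
    simp only [Pi.add_apply, hf g p, hf' g p, map_add]
  zero_mem' := by
    intro g p
    simp only [Pi.zero_apply, map_zero]
  smul_mem' := by
    intro c f hf g p
    simp only [Pi.smul_apply, hf g p, map_smul]

/-- The structure map of the induced family: `(η a x f)(g) := f (a⁻¹ * g)`. -/
def etaFun (V : P → Type*) [∀ p, AddCommGroup (V p)] [∀ p, Module k (V p)]
    (a x : G) (f : Wamb P V x) : Wamb P V (a * x * a⁻¹) :=
  fun g =>
    castLE k (Subtype.ext
        (show ((a⁻¹ * (g : G))⁻¹ * x * (a⁻¹ * (g : G)) : G)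
            = (g : G)⁻¹ * (a * x * a⁻¹) * (g : G) by group))
      (f ⟨a⁻¹ * (g : G), mem_transport P a x (g : G) g.2⟩)


lemma castLE_heq (k : Type*) [Field k] {ι : Type*} {V : ι → Type*}
    [∀ i, AddCommGroup (V i)] [∀ i, Module k (V i)] {i j : ι} (h : i = j) (v : V i) :
    HEq (castLE k h v) v := by
  subst h; rfl

/-- Transporting a section along an equality of base points does not change its values. -/
lemma castLE_Wamb_apply_heq (V : P → Type*) [∀ p, AddCommGroup (V p)] [∀ p, Module k (V p)]
    {x y : G} (h : x = y) (f : Wamb P V x) (g : {g : G // g⁻¹ * y * g ∈ P}) :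
    HEq (castLE k (V := Wamb P V) h f g) (f ⟨g, h ▸ g.2⟩) := by
  subst h; rfl

/-- The canonical automorphism of the induced family is induced pointwise by the
canonical automorphism of the original family: `(η x x f)(g) = ξ (g⁻¹xg) (g⁻¹xg) (f g)`. -/
theorem canonical_automorphism_of_induced_family
    (V : P → Type*) [∀ p, AddCommGroup (V p)] [∀ p, Module k (V p)]
    (ξ : ∀ q p : P, V p ≃ₗ[k] V (q * p * q⁻¹))
    (cocycle : ∀ q' q p : P, (ξ q p).trans (ξ q' (q * p * q⁻¹)) =
      (ξ (q' * q) p).trans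
        (castLE k (show (q' * q) * p * (q' * q)⁻¹ = q' * (q * p * q⁻¹) * q'⁻¹ by group)))
    (norm : ∀ p : P,
      (ξ 1 p).trans (castLE k (show (1 : P) * p * (1 : P)⁻¹ = p by group)) =
        LinearEquiv.refl k (V p)) :
    ∀ (x : G) (f : Wamb P V x), f ∈ IndSub k P V ξ x →
      ∀ g : {g : G // g⁻¹ * x * g ∈ P},
        castLE k (V := Wamb P V) (show x * x * x⁻¹ = x by group)
            (etaFun k P V x x f) g =
          castLE k
            (mul_inv_cancel_right (⟨(g : G)⁻¹ * x * (g : G), g.2⟩ : P)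
              (⟨(g : G)⁻¹ * x * (g : G), g.2⟩ : P))
            (ξ ⟨(g : G)⁻¹ * x * (g : G), g.2⟩ ⟨(g : G)⁻¹ * x * (g : G), g.2⟩ (f g)) := by
  intro x f hf g
  set q : P := ⟨(g : G)⁻¹ * x * (g : G), g.2⟩ with hq
  have translate : (⟨(g : G) * ((q⁻¹ : P) : G), mem_conj P q⁻¹ g.2⟩ :
      {g : G // g⁻¹ * x * g ∈ P}) = ⟨x⁻¹ * g, mem_transport P x x g (by simpa using g.2)⟩ :=
    Subtype.ext (by simp only [hq, Subgroup.coe_inv]; group)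
  have value_heq : HEq (f ⟨(g : G) * ((q⁻¹ : P) : G), mem_conj P q⁻¹ g.2⟩) (ξ q q (f g)) := by
    rw [hf g q⁻¹]
    refine (castLE_heq k _ _).trans ?_
    rw [inv_inv]
  refine eq_of_heq ?_
  refine (castLE_Wamb_apply_heq k P V _ _ g).trans ?_
  refine (castLE_heq k _ _).trans ?_
  refine HEq.trans ?_ (value_heq.trans (castLE_heq k _ _).symm)
  exact (congr_arg_heq f translate).symm
end
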